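/- (Kraus–Roth: interior rigidity for maximal Blaschke products) Let B be a maximal Blaschke product, and let f ∈ 𝓑 be nonconstant with C_f ⊇ C_B. If |f'(z)| (1 − |B(z)|²) = |B'(z)| (1 − |f(z)|²) holds at a single point z ∈ 𝔻 with B'(z) ≠ 0, then f = T ∘ B for some conformal automorphism T of 𝔻. -/

import Mathlib

open Metric Filter

/-- The order of vanishing of `f` at `z`. -/
noncomputable def vOrder (f : ℂ → ℂ) (z : ℂ) : ℕ∞ :=
  sInf ((fun n : ℕ => (n : ℕ∞)) '' {n : ℕ | iteratedDeriv n f z ≠ 0})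

/-- A (finite or infinite) Blaschke product: a holomorphic function on the open unit
disk of the form `B(z) = η z^m ∏_j (|z_j|/z_j)(z_j − z)/(1 − conj z_j · z)`, where
`|η| = 1`, `m ≥ 0`, the points `z_j ∈ 𝔻 \ {0}` satisfy the Blaschke condition
`Σ_j (1 − |z_j|) < ∞`, and the (possibly infinite) product converges. -/
def IsBlaschkeProduct (B : ℂ → ℂ) : Prop :=
  (∀ z ∈ Metric.ball (0 : ℂ) 1, DifferentiableAt ℂ B z) ∧
  ∃ (η : ℂ) (m : ℕ) (ι : Type) (a : ι → ℂ),
    ‖η‖ = 1 ∧ (∀ j, a j ≠ 0 ∧ ‖a j‖ < 1) ∧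
    Summable (fun j => 1 - ‖a j‖) ∧
    ∀ z ∈ Metric.ball (0 : ℂ) 1,
      B z = η * z ^ m *
        ∏' j, (((‖a j‖ : ℝ) : ℂ) / a j) * ((a j - z) / (1 - (starRingEnd ℂ) (a j) * z))

/-- A Blaschke product `B` is *maximal* if for every nonconstant holomorphic map `f`
of the open unit disk into the closed unit disk whose critical set contains that of
`B` (with multiplicities), one has
`|f'(z)| (1 − |B(z)|²) ≤ |B'(z)| (1 − |f(z)|²)` on the disk. -/
def IsMaximalBlaschke (B : ℂ → ℂ) : Prop :=
  IsBlaschkeProduct B ∧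
  ∀ f : ℂ → ℂ,
    (∀ z ∈ Metric.ball (0 : ℂ) 1, DifferentiableAt ℂ f z) →
    (∀ z ∈ Metric.ball (0 : ℂ) 1, ‖f z‖ ≤ 1) →
    (∃ z ∈ Metric.ball (0 : ℂ) 1, ∃ w ∈ Metric.ball (0 : ℂ) 1, f z ≠ f w) →
    (∀ z ∈ Metric.ball (0 : ℂ) 1, vOrder (deriv B) z ≤ vOrder (deriv f) z) →
    ∀ z ∈ Metric.ball (0 : ℂ) 1,
      ‖deriv f z‖ * (1 - ‖B z‖ ^ 2) ≤ ‖deriv B z‖ * (1 - ‖f z‖ ^ 2)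

/-!
Write `λ_f = |f'| / (1 - |f|²)` for the density of the pullback under `f` of the hyperbolic metric
of the disk; maximality of `B` says `λ_f ≤ λ_B`. Densities are invariant under post-composition
with automorphisms of the disk, so near the point of equality one may assume `f = B = 0` there and
use `B` as a local coordinate: now `f` fixes `0`, `|f'(0)| = 1` and `λ_f ≤ λ_id`. At a point `w` of
a small circle `|w| = s` where `|f|` is maximal, the Schwarz lemma on `|w| < s` forces
`s |f'(w)| ≥ |f(w)|`, which together with `λ_f(w) ≤ λ_id(w)` gives `|f(w)| ≤ s`. So `f` maps
`|w| < s` into `|w| ≤ s`, and the equality case of the Schwarz lemma makes it a rotation. The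
identity theorem spreads the local relation `f = T ∘ B` to the whole disk.
-/

open Set Topology
open scoped ComplexConjugate

section DiskInvolution

variable {c p q x : ℂ}

lemma one_sub_conj_mul_ne_zero (hp : ‖p‖ < 1) (hx : ‖x‖ ≤ 1) : 1 - conj p * x ≠ 0 := by
  refine sub_ne_zero.mpr fun h ↦ ?_
  have hlt : ‖conj p * x‖ < 1 := by
    rw [norm_mul, RCLike.norm_conj]
    exact mul_lt_one_of_nonneg_of_lt_one_left (norm_nonneg p) hp hx
  simp [← h] at hlt

lemma norm_one_sub_conj_mul_sq_sub_norm_sub_sq (p x : ℂ) :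
    ‖1 - conj p * x‖ ^ 2 - ‖p - x‖ ^ 2 = (1 - ‖p‖ ^ 2) * (1 - ‖x‖ ^ 2) := by
  simp only [← Complex.normSq_eq_norm_sq, Complex.normSq_apply, Complex.sub_re, Complex.sub_im,
    Complex.mul_re, Complex.mul_im, Complex.conj_re, Complex.conj_im, Complex.one_re,
    Complex.one_im]
  ring

lemma one_sub_norm_sq_pos (hx : ‖x‖ < 1) : 0 < 1 - ‖x‖ ^ 2 :=
  sub_pos.mpr (pow_lt_one₀ (norm_nonneg x) hx two_ne_zero)

/-- The conformal involution of the unit disk that exchanges `p` and `0`, for `‖p‖ < 1`. -/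
noncomputable def diskInvolution (p x : ℂ) : ℂ := (p - x) / (1 - conj p * x)

lemma diskInvolution_self (p : ℂ) : diskInvolution p p = 0 := by
  simp [diskInvolution]

lemma one_sub_norm_diskInvolution_sq (hp : ‖p‖ < 1) (hx : ‖x‖ ≤ 1) :
    1 - ‖diskInvolution p x‖ ^ 2 =
      (1 - ‖p‖ ^ 2) * (1 - ‖x‖ ^ 2) / ‖1 - conj p * x‖ ^ 2 := by
  have hd : ‖1 - conj p * x‖ ^ 2 ≠ 0 :=
    pow_ne_zero 2 (norm_ne_zero_iff.mpr (one_sub_conj_mul_ne_zero hp hx))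
  rw [diskInvolution, norm_div, div_pow, ← norm_one_sub_conj_mul_sq_sub_norm_sub_sq, sub_div,
    div_self hd]

lemma norm_diskInvolution_le_one (hp : ‖p‖ < 1) (hx : ‖x‖ ≤ 1) : ‖diskInvolution p x‖ ≤ 1 := by
  have hx2 : 0 ≤ 1 - ‖x‖ ^ 2 := sub_nonneg.mpr (pow_le_one₀ (norm_nonneg x) hx)
  have hp2 := one_sub_norm_sq_pos hp
  rw [← sq_le_one_iff₀ (norm_nonneg _), ← sub_nonneg, one_sub_norm_diskInvolution_sq hp hx]
  positivity

lemma norm_diskInvolution_lt_one (hp : ‖p‖ < 1) (hx : ‖x‖ < 1) : ‖diskInvolution p x‖ < 1 := by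
  have hd : 0 < ‖1 - conj p * x‖ := norm_pos_iff.mpr (one_sub_conj_mul_ne_zero hp hx.le)
  have hp2 := one_sub_norm_sq_pos hp
  have hx2 := one_sub_norm_sq_pos hx
  rw [← sq_lt_one_iff₀ (norm_nonneg _), ← sub_pos, one_sub_norm_diskInvolution_sq hp hx.le]
  positivity

lemma diskInvolution_mul_one_sub (hp : ‖p‖ < 1) (hx : ‖x‖ ≤ 1) :
    diskInvolution p x * (1 - conj p * x) = p - x :=
  div_mul_cancel₀ _ (one_sub_conj_mul_ne_zero hp hx)

lemma diskInvolution_diskInvolution (hp : ‖p‖ < 1) (hx : ‖x‖ ≤ 1) :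
    diskInvolution p (diskInvolution p x) = x := by
  rw [diskInvolution,
    div_eq_iff (one_sub_conj_mul_ne_zero hp (norm_diskInvolution_le_one hp hx))]
  linear_combination -diskInvolution_mul_one_sub hp hx

lemma diskInvolution_rotation (hc : ‖c‖ = 1) (p x : ℂ) :
    diskInvolution p (c * x) = c * diskInvolution (conj c * p) x := by
  have hcc : conj c * c = 1 := by simp [Complex.conj_mul', hc]
  have hnum : p - c * x = c * (conj c * p - x) := by linear_combination -p * hcc
  have hden : 1 - conj p * (c * x) = 1 - conj (conj c * p) * x := by
    rw [map_mul, Complex.conj_conj]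
    ring
  rw [diskInvolution, diskInvolution, hnum, hden, mul_div_assoc]

-- The zero of `diskInvolution p ∘ diskInvolution q` is `diskInvolution q p`, as both factors are
-- involutions; this determines the composition up to a rotation.
lemma diskInvolution_comp (hp : ‖p‖ < 1) (hq : ‖q‖ < 1) (hx : ‖x‖ ≤ 1) :
    diskInvolution p (diskInvolution q x) =
      -((1 - conj q * p) / (1 - conj p * q)) * diskInvolution (diskInvolution q p) x := by
  set y := diskInvolution q x
  set a := diskInvolution q p
  have hy : y * (1 - conj q * x) = q - x := diskInvolution_mul_one_sub hq hx
  have ha : a * (1 - conj q * p) = q - p := diskInvolution_mul_one_sub hq hp.le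
  have ha' : conj a * (1 - q * conj p) = conj q - conj p := by simpa using congrArg conj ha
  have hnum : (p - y) * (1 - conj q * x) = -((1 - conj q * p) * (a - x)) := by
    linear_combination -hy + ha
  have hden : (1 - conj p * y) * (1 - conj q * x) = (1 - conj p * q) * (1 - conj a * x) := by
    linear_combination -conj p * hy + x * ha'
  calc diskInvolution p y
      = (p - y) * (1 - conj q * x) / ((1 - conj p * y) * (1 - conj q * x)) :=
        (mul_div_mul_right _ _ (one_sub_conj_mul_ne_zero hq hx)).symm
    _ = -((1 - conj q * p) / (1 - conj p * q)) * diskInvolution a x := by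
        rw [hnum, hden, neg_div, mul_div_mul_comm, neg_mul, diskInvolution]

lemma exists_rotation_diskInvolution_eq (hc : ‖c‖ = 1) (hp : ‖p‖ < 1) (hq : ‖q‖ < 1) :
    ∃ τ a : ℂ, ‖τ‖ = 1 ∧ ‖a‖ < 1 ∧
      ∀ x, ‖x‖ ≤ 1 → diskInvolution p (c * diskInvolution q x) = τ * diskInvolution a x := by
  set r := conj c * p with hr
  have hr1 : ‖r‖ < 1 := by simpa [hr, hc] using hp
  have hnorm : ‖1 - conj q * r‖ = ‖1 - conj r * q‖ := by
    rw [← RCLike.norm_conj, map_sub, map_mul, map_one, Complex.conj_conj, mul_comm]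
  refine ⟨c * -((1 - conj q * r) / (1 - conj r * q)), diskInvolution q r, ?_,
    norm_diskInvolution_lt_one hq hr1, fun x hx ↦ ?_⟩
  · rw [norm_mul, norm_neg, norm_div, hc, hnorm, one_mul,
      div_self (norm_ne_zero_iff.mpr (one_sub_conj_mul_ne_zero hr1 hq.le))]
  · rw [diskInvolution_rotation hc, diskInvolution_comp hr1 hq hx, mul_assoc]

lemma hasDerivAt_diskInvolution (hp : ‖p‖ < 1) (hx : ‖x‖ ≤ 1) :
    HasDerivAt (diskInvolution p) ((conj p * p - 1) / (1 - conj p * x) ^ 2) x := by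
  refine (((hasDerivAt_id x).const_sub p).div (((hasDerivAt_id x).const_mul (conj p)).const_sub 1)
    (one_sub_conj_mul_ne_zero hp hx)).congr_deriv ?_
  simp only [id]
  ring

lemma analyticAt_diskInvolution (hp : ‖p‖ < 1) (hx : ‖x‖ ≤ 1) :
    AnalyticAt ℂ (diskInvolution p) x :=
  (analyticAt_const.sub analyticAt_id).div
    (analyticAt_const.sub (analyticAt_const.mul analyticAt_id)) (one_sub_conj_mul_ne_zero hp hx)

end DiskInvolution

section HyperbolicDensity

variable {f g φ : ℂ → ℂ} {p z : ℂ}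

/-- The density at `z` of the pullback under `f` of the hyperbolic metric `|dw| / (1 - |w|²)` of the
unit disk; it is meaningful only where `‖f z‖ < 1`. -/
noncomputable def hyperbolicDensity (f : ℂ → ℂ) (z : ℂ) : ℝ := ‖deriv f z‖ / (1 - ‖f z‖ ^ 2)

lemma hyperbolicDensity_congr (h : f =ᶠ[𝓝 z] g) :
    hyperbolicDensity f z = hyperbolicDensity g z := by
  rw [hyperbolicDensity, hyperbolicDensity, h.deriv_eq, h.eq_of_nhds]

lemma hyperbolicDensity_id (z : ℂ) : hyperbolicDensity id z = 1 / (1 - ‖z‖ ^ 2) := by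
  simp [hyperbolicDensity]

lemma hyperbolicDensity_comp (hf : DifferentiableAt ℂ f (φ z)) (hφ : DifferentiableAt ℂ φ z) :
    hyperbolicDensity (f ∘ φ) z = hyperbolicDensity f (φ z) * ‖deriv φ z‖ := by
  rw [hyperbolicDensity, hyperbolicDensity, deriv_comp z hf hφ, norm_mul, Function.comp_apply,
    mul_div_right_comm]

lemma hyperbolicDensity_diskInvolution (hp : ‖p‖ < 1) (hz : ‖z‖ < 1) :
    hyperbolicDensity (diskInvolution p) z = 1 / (1 - ‖z‖ ^ 2) := by
  have hd : ‖1 - conj p * z‖ ≠ 0 := norm_ne_zero_iff.mpr (one_sub_conj_mul_ne_zero hp hz.le)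
  have hp2 := (one_sub_norm_sq_pos hp).ne'
  have hz2 := (one_sub_norm_sq_pos hz).ne'
  have hnum : ‖conj p * p - 1‖ = 1 - ‖p‖ ^ 2 := by
    rw [norm_sub_rev, Complex.conj_mul', ← Complex.ofReal_pow, ← Complex.ofReal_one,
      ← Complex.ofReal_sub, Complex.norm_real, Real.norm_of_nonneg (one_sub_norm_sq_pos hp).le]
  rw [hyperbolicDensity, (hasDerivAt_diskInvolution hp hz.le).deriv,
    one_sub_norm_diskInvolution_sq hp hz.le, norm_div, norm_pow, hnum]
  field_simp

lemma hyperbolicDensity_diskInvolution_comp (hp : ‖p‖ < 1) (hf : DifferentiableAt ℂ f z)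
    (hfz : ‖f z‖ < 1) : hyperbolicDensity (diskInvolution p ∘ f) z = hyperbolicDensity f z := by
  rw [hyperbolicDensity_comp (hasDerivAt_diskInvolution hp hfz.le).differentiableAt hf,
    hyperbolicDensity_diskInvolution hp hfz, one_div_mul_eq_div, hyperbolicDensity]

lemma hyperbolicDensity_ne_zero_iff (hf : ‖f z‖ < 1) :
    hyperbolicDensity f z ≠ 0 ↔ deriv f z ≠ 0 := by
  rw [hyperbolicDensity, div_ne_zero_iff, norm_ne_zero_iff]
  exact and_iff_left (one_sub_norm_sq_pos hf).ne'

lemma hyperbolicDensity_le_iff (hf : ‖f z‖ < 1) (hg : ‖g z‖ < 1) :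
    hyperbolicDensity f z ≤ hyperbolicDensity g z ↔
      ‖deriv f z‖ * (1 - ‖g z‖ ^ 2) ≤ ‖deriv g z‖ * (1 - ‖f z‖ ^ 2) :=
  div_le_div_iff₀ (one_sub_norm_sq_pos hf) (one_sub_norm_sq_pos hg)

lemma hyperbolicDensity_eq_iff (hf : ‖f z‖ < 1) (hg : ‖g z‖ < 1) :
    hyperbolicDensity f z = hyperbolicDensity g z ↔
      ‖deriv f z‖ * (1 - ‖g z‖ ^ 2) = ‖deriv g z‖ * (1 - ‖f z‖ ^ 2) :=
  div_eq_div_iff (one_sub_norm_sq_pos hf).ne' (one_sub_norm_sq_pos hg).ne'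

end HyperbolicDensity

section BoundarySchwarz

lemma norm_le_norm_deriv_of_norm_le_mul {E : Type*} [NormedAddCommGroup E] [NormedSpace ℝ E]
    {γ : ℝ → E} {γ' : E} (hγ : HasDerivWithinAt γ γ' (Iio 1) 1)
    (hle : ∀ᶠ t in 𝓝[<] 1, ‖γ t‖ ≤ t * ‖γ 1‖) : ‖γ 1‖ ≤ ‖γ'‖ := by
  have hslope : Tendsto (fun t ↦ ‖slope γ 1 t‖) (𝓝[<] 1) (𝓝 ‖γ'‖) :=
    ((hasDerivWithinAt_iff_tendsto_slope' self_notMem_Iio).mp hγ).norm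
  refine ge_of_tendsto hslope ?_
  filter_upwards [hle, self_mem_nhdsWithin] with t ht ht1
  have ht1' : 0 < 1 - t := sub_pos.mpr ht1
  rw [slope_def_module, norm_smul, norm_inv, norm_sub_rev t, Real.norm_of_nonneg ht1'.le,
    inv_mul_eq_div, le_div_iff₀ ht1', norm_sub_rev]
  linarith [norm_sub_norm_le (γ 1) (γ t)]

lemma norm_le_norm_mul_norm_deriv_of_mapsTo_ball {E : Type*} [NormedAddCommGroup E]
    [NormedSpace ℂ E] {f : ℂ → E} {w : ℂ} (hf : DifferentiableOn ℂ f (ball 0 ‖w‖))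
    (hfw : DifferentiableAt ℂ f w) (hf0 : f 0 = 0)
    (hmaps : MapsTo f (ball 0 ‖w‖) (closedBall 0 ‖f w‖)) : ‖f w‖ ≤ ‖w‖ * ‖deriv f w‖ := by
  rcases eq_or_ne w 0 with rfl | hw
  · simp [hf0]
  have hγ : HasDerivAt (fun t : ℝ ↦ f (t • w)) (w • deriv f w) 1 := by
    have hline : HasDerivAt (fun t : ℝ ↦ t • w) w 1 := by
      simpa using (hasDerivAt_id (1 : ℝ)).smul_const w
    exact HasDerivAt.scomp_of_eq 1 hfw.hasDerivAt hline (one_smul ℝ w).symm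
  have hle : ∀ᶠ t : ℝ in 𝓝[<] 1, ‖f (t • w)‖ ≤ t * ‖f ((1 : ℝ) • w)‖ := by
    filter_upwards [Ioo_mem_nhdsLT zero_lt_one] with t ⟨ht0, ht1⟩
    have hnorm : ‖t • w‖ = t * ‖w‖ := by rw [norm_smul, Real.norm_of_nonneg ht0.le]
    have hmem : t • w ∈ ball (0 : ℂ) ‖w‖ := by
      rw [mem_ball_zero_iff, hnorm]
      exact mul_lt_of_lt_one_left (norm_pos_iff.mpr hw) ht1
    calc ‖f (t • w)‖ ≤ ‖f w‖ / ‖w‖ * ‖t • w‖ := by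
          simpa [hf0] using
            Complex.dist_le_div_mul_dist_of_mapsTo_ball hf (by rwa [hf0]) hmem
      _ = t * ‖f w‖ := by rw [hnorm]; field_simp
      _ = t * ‖f ((1 : ℝ) • w)‖ := by rw [one_smul]
  simpa [norm_smul] using norm_le_norm_deriv_of_norm_le_mul hγ.hasDerivWithinAt hle

end BoundarySchwarz

section LocalRigidity

variable {f g : ℂ → ℂ} {z : ℂ}

lemma mapsTo_ball_of_hyperbolicDensity_le_id {s : ℝ} (hs0 : 0 < s) (hs1 : s < 1)
    (hg : ∀ w ∈ closedBall 0 s, DifferentiableAt ℂ g w) (hg0 : g 0 = 0)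
    (hlt : ∀ w ∈ sphere 0 s, ‖g w‖ < 1)
    (hle : ∀ w ∈ sphere 0 s, hyperbolicDensity g w ≤ hyperbolicDensity id w) :
    MapsTo g (ball 0 s) (closedBall 0 s) := by
  have hdiff : DifferentiableOn ℂ g (closedBall 0 s) :=
    fun w hw ↦ (hg w hw).differentiableWithinAt
  obtain ⟨w, hw, hmax⟩ := Complex.exists_mem_frontier_isMaxOn_norm isBounded_ball
    (nonempty_ball.mpr hs0) (hdiff.diffContOnCl_ball Subset.rfl)
  rw [frontier_ball _ hs0.ne'] at hw
  have hws : ‖w‖ = s := mem_sphere_zero_iff_norm.mp hw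
  have hmax' : MapsTo g (ball 0 s) (closedBall 0 ‖g w‖) := fun x hx ↦
    mem_closedBall_zero_iff.mpr (hmax (subset_closure hx))
  have hderiv : ‖g w‖ ≤ s * ‖deriv g w‖ := by
    have hgw := hg w (sphere_subset_closedBall hw)
    rw [← hws] at hdiff hmax' ⊢
    exact norm_le_norm_mul_norm_deriv_of_mapsTo_ball (hdiff.mono ball_subset_closedBall) hgw hg0
      hmax'
  have hdensity : ‖deriv g w‖ * (1 - s ^ 2) ≤ 1 - ‖g w‖ ^ 2 := by
    simpa [hws] using
      (hyperbolicDensity_le_iff (hlt w hw) (g := id) (by simpa [hws])).mp (hle w hw)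
  have hs2 : 0 ≤ 1 - s ^ 2 := sub_nonneg.mpr (pow_le_one₀ hs0.le hs1.le)
  have hcompare : ‖g w‖ * (1 - s ^ 2) ≤ s * (1 - ‖g w‖ ^ 2) :=
    calc ‖g w‖ * (1 - s ^ 2) ≤ s * ‖deriv g w‖ * (1 - s ^ 2) := by gcongr
      _ = s * (‖deriv g w‖ * (1 - s ^ 2)) := mul_assoc _ _ _
      _ ≤ s * (1 - ‖g w‖ ^ 2) := by gcongr
  have hgw : ‖g w‖ ≤ s := by
    have hfactored : (‖g w‖ - s) * (1 + s * ‖g w‖) ≤ 0 := by linarith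
    exact sub_nonpos.mp (nonpos_of_mul_nonpos_left hfactored (by positivity))
  exact hmax'.mono_right (closedBall_subset_closedBall hgw)

lemma eventuallyEq_deriv_mul_of_hyperbolicDensity_le_id (hg : AnalyticAt ℂ g 0) (hg0 : g 0 = 0)
    (hg1 : ‖deriv g 0‖ = 1)
    (hle : ∀ᶠ w in 𝓝 0, hyperbolicDensity g w ≤ hyperbolicDensity id w) :
    g =ᶠ[𝓝 0] fun w ↦ deriv g 0 * w := by
  have hlt : ∀ᶠ w in 𝓝 0, ‖g w‖ < 1 :=
    hg.continuousAt.norm.eventually_lt_const (by simp [hg0])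
  obtain ⟨r, hr0, hr⟩ := eventually_nhds_iff_ball.mp
    ((hg.eventually_analyticAt.mono fun _ ↦ AnalyticAt.differentiableAt).and (hlt.and hle))
  obtain ⟨s, hs0, hs⟩ := exists_between (lt_min hr0 one_pos)
  have hsr : closedBall (0 : ℂ) s ⊆ ball 0 r :=
    closedBall_subset_ball (hs.trans_le (min_le_left r 1))
  have hdiff : ∀ w ∈ closedBall 0 s, DifferentiableAt ℂ g w := fun w hw ↦ (hr w (hsr hw)).1
  have hmaps : MapsTo g (ball 0 s) (closedBall 0 s) :=
    mapsTo_ball_of_hyperbolicDensity_le_id hs0 (hs.trans_le (min_le_right r 1)) hdiff hg0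
      (fun w hw ↦ (hr w (hsr (sphere_subset_closedBall hw))).2.1)
      (fun w hw ↦ (hr w (hsr (sphere_subset_closedBall hw))).2.2)
  have haffine := Complex.affine_of_mapsTo_ball_of_norm_dslope_eq_div
    (fun w hw ↦ (hdiff w (ball_subset_closedBall hw)).differentiableWithinAt)
    (by rwa [hg0]) (mem_ball_self hs0) (by rw [dslope_same, hg1, div_self hs0.ne'])
  filter_upwards [ball_mem_nhds 0 hs0] with w hw
  simpa [hg0, mul_comm] using haffine hw

lemma exists_analyticAt_local_inverse (hg : AnalyticAt ℂ g z) (hg' : deriv g z ≠ 0) :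
    ∃ φ : ℂ → ℂ, AnalyticAt ℂ φ (g z) ∧ φ (g z) = z ∧ φ ∘ g =ᶠ[𝓝 z] id ∧ g ∘ φ =ᶠ[𝓝 (g z)] id := by
  have hstrict := hg.hasStrictDerivAt
  have hleft := hstrict.eventually_left_inverse hg'
  exact ⟨_, hg.analyticAt_localInverse hg', hleft.self_of_nhds, hleft,
    hstrict.eventually_right_inverse hg'⟩

lemma exists_eventuallyEq_mul_of_hyperbolicDensity_le (hf : AnalyticAt ℂ f z)
    (hg : AnalyticAt ℂ g z) (hfz : f z = 0) (hgz : g z = 0) (hg' : deriv g z ≠ 0)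
    (heq : hyperbolicDensity f z = hyperbolicDensity g z)
    (hle : ∀ᶠ w in 𝓝 z, hyperbolicDensity f w ≤ hyperbolicDensity g w) :
    ∃ c : ℂ, ‖c‖ = 1 ∧ ∀ᶠ w in 𝓝 z, f w = c * g w := by
  obtain ⟨φ, hφ, hφz, hφg, hgφ⟩ := exists_analyticAt_local_inverse hg hg'
  rw [hgz] at hφ hφz hgφ
  have hφ_tendsto : Tendsto φ (𝓝 0) (𝓝 z) := by simpa [hφz] using hφ.continuousAt.tendsto
  have hcoord : ∀ᶠ y in 𝓝 0,
      hyperbolicDensity (f ∘ φ) y = hyperbolicDensity f (φ y) * ‖deriv φ y‖ ∧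
        hyperbolicDensity id y = hyperbolicDensity g (φ y) * ‖deriv φ y‖ := by
    filter_upwards [hφ.eventually_analyticAt, hφ_tendsto.eventually hf.eventually_analyticAt,
      hφ_tendsto.eventually hg.eventually_analyticAt, hgφ.eventuallyEq_nhds] with y hφy hfy hgy hid
    exact ⟨hyperbolicDensity_comp hfy.differentiableAt hφy.differentiableAt,
      hyperbolicDensity_congr hid ▸
        hyperbolicDensity_comp hgy.differentiableAt hφy.differentiableAt⟩
  have hfφ0 : (f ∘ φ) 0 = 0 := by simp [hφz, hfz]
  have hfφ1 : ‖deriv (f ∘ φ) 0‖ = 1 := by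
    have h : hyperbolicDensity (f ∘ φ) 0 = hyperbolicDensity id 0 := by
      rw [hcoord.self_of_nhds.1, hcoord.self_of_nhds.2, hφz, heq]
    rw [hyperbolicDensity, hfφ0, hyperbolicDensity_id] at h
    simpa using h
  have hrot : f ∘ φ =ᶠ[𝓝 0] fun y ↦ deriv (f ∘ φ) 0 * y := by
    refine eventuallyEq_deriv_mul_of_hyperbolicDensity_le_id (hf.comp_of_eq hφ hφz) hfφ0 hfφ1 ?_
    filter_upwards [hcoord, hφ_tendsto.eventually hle] with y hy hley
    rw [hy.1, hy.2]
    gcongr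
  have hg_tendsto : Tendsto g (𝓝 z) (𝓝 0) := by simpa [hgz] using hg.continuousAt.tendsto
  refine ⟨_, hfφ1, ?_⟩
  filter_upwards [hg_tendsto.eventually hrot, hφg] with w hw hφgw
  simpa [show φ (g w) = w from hφgw] using hw

theorem exists_eventuallyEq_diskInvolution_of_hyperbolicDensity_le (hf : AnalyticAt ℂ f z)
    (hg : AnalyticAt ℂ g z) (hfz : ‖f z‖ < 1) (hgz : ‖g z‖ < 1) (hg' : deriv g z ≠ 0)
    (heq : hyperbolicDensity f z = hyperbolicDensity g z)
    (hle : ∀ᶠ w in 𝓝 z, hyperbolicDensity f w ≤ hyperbolicDensity g w) :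
    ∃ τ a : ℂ, ‖τ‖ = 1 ∧ ‖a‖ < 1 ∧ ∀ᶠ w in 𝓝 z, f w = τ * diskInvolution a (g w) := by
  set F := diskInvolution (f z) ∘ f
  set G := diskInvolution (g z) ∘ g
  have hnear : ∀ᶠ w in 𝓝 z, ‖f w‖ < 1 ∧ ‖g w‖ < 1 ∧
      hyperbolicDensity F w = hyperbolicDensity f w ∧
        hyperbolicDensity G w = hyperbolicDensity g w := by
    filter_upwards [hf.continuousAt.norm.eventually_lt_const hfz,
      hg.continuousAt.norm.eventually_lt_const hgz, hf.eventually_analyticAt,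
      hg.eventually_analyticAt] with w hfw hgw hfw_an hgw_an
    exact ⟨hfw, hgw, hyperbolicDensity_diskInvolution_comp hfz hfw_an.differentiableAt hfw,
      hyperbolicDensity_diskInvolution_comp hgz hgw_an.differentiableAt hgw⟩
  obtain ⟨-, -, hFz, hGz⟩ := hnear.self_of_nhds
  have hG0 : G z = 0 := diskInvolution_self (g z)
  have hG' : deriv G z ≠ 0 := by
    rwa [← hyperbolicDensity_ne_zero_iff (by simp [hG0]), hGz, hyperbolicDensity_ne_zero_iff hgz]
  obtain ⟨c, hc, hFG⟩ := exists_eventuallyEq_mul_of_hyperbolicDensity_le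
    ((analyticAt_diskInvolution hfz hfz.le).comp hf)
    ((analyticAt_diskInvolution hgz hgz.le).comp hg)
    (diskInvolution_self (f z)) hG0 hG' (by rw [hFz, hGz, heq])
    (by filter_upwards [hnear, hle] with w ⟨_, _, hFw, hGw⟩ hlew using by rwa [hFw, hGw])
  obtain ⟨τ, a, hτ, ha, hcomp⟩ := exists_rotation_diskInvolution_eq hc hfz hgz
  refine ⟨τ, a, hτ, ha, ?_⟩
  filter_upwards [hFG, hnear] with w hw ⟨hfw, hgw, _⟩
  calc f w = diskInvolution (f z) (F w) := (diskInvolution_diskInvolution hfz hfw.le).symm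
    _ = diskInvolution (f z) (c * diskInvolution (g z) (g w)) :=
        congrArg (diskInvolution (f z)) hw
    _ = τ * diskInvolution a (g w) := hcomp (g w) hgw.le

end LocalRigidity

section MaximumModulus

lemma norm_lt_of_norm_le_of_exists_ne {E F : Type*} [NormedAddCommGroup E] [NormedSpace ℂ E]
    [NormedAddCommGroup F] [NormedSpace ℂ F] [StrictConvexSpace ℝ F] {f : E → F} {U : Set E}
    {M : ℝ} (hU : IsOpen U) (hUc : IsPreconnected U) (hf : DifferentiableOn ℂ f U)
    (hle : ∀ z ∈ U, ‖f z‖ ≤ M) (hne : ∃ z ∈ U, ∃ w ∈ U, f z ≠ f w) : ∀ z ∈ U, ‖f z‖ < M := by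
  refine fun z hz ↦ (hle z hz).lt_of_ne fun hM ↦ ?_
  have hconst : EqOn f (Function.const E (f z)) U :=
    Complex.eqOn_of_isPreconnected_of_isMaxOn_norm hUc hU hf hz
      fun w hw ↦ (hle w hw).trans_eq hM.symm
  obtain ⟨x, hx, y, hy, hxy⟩ := hne
  exact hxy ((hconst hx).trans (hconst hy).symm)

lemma exists_ne_of_deriv_ne_zero {𝕜 F : Type*} [NontriviallyNormedField 𝕜] [NormedAddCommGroup F]
    [NormedSpace 𝕜 F] {f : 𝕜 → F} {U : Set 𝕜} {z : 𝕜} (hU : U ∈ 𝓝 z) (hf' : deriv f z ≠ 0) :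
    ∃ w ∈ U, f z ≠ f w := by
  by_contra! hconst
  have h : f =ᶠ[𝓝 z] fun _ ↦ f z := by
    filter_upwards [hU] with w hw using (hconst w hw).symm
  exact hf' (h.deriv_eq.trans (deriv_const z (f z)))

end MaximumModulus

section BlaschkeProduct

lemma norm_tprod_le_one {ι R : Type*} [NormedCommRing R] [NormOneClass R] {f : ι → R}
    (hf : ∀ i, ‖f i‖ ≤ 1) : ‖∏' i, f i‖ ≤ 1 := by
  by_cases hm : Multipliable f
  · refine le_of_tendsto (Tendsto.norm hm.hasProd) (Eventually.of_forall fun s ↦ ?_)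
    exact (s.norm_prod_le f).trans
      (Finset.prod_le_one (fun i _ ↦ norm_nonneg (f i)) fun i _ ↦ hf i)
  · rw [tprod_eq_one_of_not_multipliable hm, norm_one]

variable {B : ℂ → ℂ}

lemma IsBlaschkeProduct.differentiableOn (hB : IsBlaschkeProduct B) :
    DifferentiableOn ℂ B (ball 0 1) :=
  fun z hz ↦ (hB.1 z hz).differentiableWithinAt

lemma IsBlaschkeProduct.norm_le_one (hB : IsBlaschkeProduct B) :
    ∀ z ∈ ball (0 : ℂ) 1, ‖B z‖ ≤ 1 := by
  obtain ⟨-, η, m, ι, a, hη, ha, -, hprod⟩ := hB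
  intro z hz
  have hz1 : ‖z‖ ≤ 1 := (mem_ball_zero_iff.mp hz).le
  have hfactor : ∀ j, ‖((‖a j‖ : ℝ) : ℂ) / a j * ((a j - z) / (1 - conj (a j) * z))‖ ≤ 1 := by
    intro j
    have hrot : ‖((‖a j‖ : ℝ) : ℂ) / a j‖ = 1 := by
      rw [norm_div, Complex.norm_real, norm_norm, div_self (norm_ne_zero_iff.mpr (ha j).1)]
    rw [norm_mul, hrot, one_mul]
    exact norm_diskInvolution_le_one (ha j).2 hz1
  rw [hprod z hz, norm_mul, norm_mul, hη, one_mul, norm_pow]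
  exact mul_le_one₀ (pow_le_one₀ (norm_nonneg z) hz1) (norm_nonneg _) (norm_tprod_le_one hfactor)

lemma IsBlaschkeProduct.norm_lt_one_of_deriv_ne_zero (hB : IsBlaschkeProduct B) {z : ℂ}
    (hz : z ∈ ball (0 : ℂ) 1) (hB' : deriv B z ≠ 0) : ‖B z‖ < 1 :=
  norm_lt_of_norm_le_of_exists_ne isOpen_ball (convex_ball 0 1).isPreconnected hB.differentiableOn
    hB.norm_le_one ⟨z, hz, exists_ne_of_deriv_ne_zero (isOpen_ball.mem_nhds hz) hB'⟩ z hz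

end BlaschkeProduct

theorem kraus_roth_interior_rigidity_general {U : Set ℂ} (hU : IsPreconnected U) {f B : ℂ → ℂ}
    (hf : AnalyticOnNhd ℂ f U) (hB : AnalyticOnNhd ℂ B U) {z : ℂ} (hz : z ∈ U)
    (hfz : ‖f z‖ < 1) (hBz : ‖B z‖ < 1) (hB' : deriv B z ≠ 0)
    (hle : ∀ᶠ w in 𝓝 z, ‖deriv f w‖ * (1 - ‖B w‖ ^ 2) ≤ ‖deriv B w‖ * (1 - ‖f w‖ ^ 2))
    (heq : ‖deriv f z‖ * (1 - ‖B z‖ ^ 2) = ‖deriv B z‖ * (1 - ‖f z‖ ^ 2)) :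
    ∃ (τ : ℂ) (z₀ : ℂ), ‖τ‖ = 1 ∧ ‖z₀‖ < 1 ∧
      ∀ w ∈ U, f w = τ * (z₀ - B w) / (1 - conj z₀ * B w) := by
  have hnear : ∀ᶠ w in 𝓝 z, ‖f w‖ < 1 ∧ ‖B w‖ < 1 :=
    ((hf z hz).continuousAt.norm.eventually_lt_const hfz).and
      ((hB z hz).continuousAt.norm.eventually_lt_const hBz)
  obtain ⟨τ, z₀, hτ, hz₀, hlocal⟩ := exists_eventuallyEq_diskInvolution_of_hyperbolicDensity_le
    (hf z hz) (hB z hz) hfz hBz hB' ((hyperbolicDensity_eq_iff hfz hBz).mpr heq)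
    (by filter_upwards [hnear, hle] with w hw using (hyperbolicDensity_le_iff hw.1 hw.2).mpr)
  have hglobal : EqOn (fun w ↦ f w * (1 - conj z₀ * B w)) (fun w ↦ τ * (z₀ - B w)) U := by
    refine (hf.mul (analyticOnNhd_const.sub (analyticOnNhd_const.mul hB)))
      |>.eqOn_of_preconnected_of_eventuallyEq
        (analyticOnNhd_const.mul (analyticOnNhd_const.sub hB)) hU hz ?_
    filter_upwards [hlocal, hnear] with w hw hw_lt
    change f w * (1 - conj z₀ * B w) = τ * (z₀ - B w)
    rw [hw, mul_assoc, diskInvolution_mul_one_sub hz₀ hw_lt.2.le]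
  refine ⟨τ, z₀, hτ, hz₀, fun w hw ↦ eq_div_of_mul_eq (fun hden ↦ ?_) (hglobal hw)⟩
  have hBw : B w = z₀ := by
    have hτ0 : τ ≠ 0 := norm_ne_zero_iff.mp (by simp [hτ])
    simpa [hden, hτ0, sub_eq_zero, eq_comm] using hglobal hw
  exact one_sub_conj_mul_ne_zero hz₀ hz₀.le (hBw ▸ hden)

/-- **Kraus–Roth: interior rigidity for maximal Blaschke products.** If `B` is a
maximal Blaschke product, `f` is a nonconstant holomorphic map of the disk into the
closed disk whose critical set contains that of `B`, and
`|f'(z)| (1 − |B(z)|²) = |B'(z)| (1 − |f(z)|²)` at a single point `z` of the disk with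
`B'(z) ≠ 0`, then `f = T ∘ B` for some conformal automorphism `T` of the disk. -/
theorem kraus_roth_interior_rigidity (B : ℂ → ℂ) (hB : IsMaximalBlaschke B)
    (f : ℂ → ℂ)
    (hf_diff : ∀ z ∈ Metric.ball (0 : ℂ) 1, DifferentiableAt ℂ f z)
    (hf_le : ∀ z ∈ Metric.ball (0 : ℂ) 1, ‖f z‖ ≤ 1)
    (hf_nc : ∃ z ∈ Metric.ball (0 : ℂ) 1, ∃ w ∈ Metric.ball (0 : ℂ) 1, f z ≠ f w)
    (hcrit : ∀ z ∈ Metric.ball (0 : ℂ) 1, vOrder (deriv B) z ≤ vOrder (deriv f) z)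
    (z : ℂ) (hz : z ∈ Metric.ball (0 : ℂ) 1) (hz' : deriv B z ≠ 0)
    (heq : ‖deriv f z‖ * (1 - ‖B z‖ ^ 2) = ‖deriv B z‖ * (1 - ‖f z‖ ^ 2)) :
    ∃ (τ : ℂ) (z₀ : ℂ), ‖τ‖ = 1 ∧ ‖z₀‖ < 1 ∧
      ∀ w ∈ Metric.ball (0 : ℂ) 1,
        f w = τ * (z₀ - B w) / (1 - (starRingEnd ℂ) z₀ * B w) := by
  have hU : IsPreconnected (ball (0 : ℂ) 1) := (convex_ball 0 1).isPreconnected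
  have hf : DifferentiableOn ℂ f (ball 0 1) := fun w hw ↦ (hf_diff w hw).differentiableWithinAt
  exact kraus_roth_interior_rigidity_general hU (hf.analyticOnNhd isOpen_ball)
    (hB.1.differentiableOn.analyticOnNhd isOpen_ball) hz
    (norm_lt_of_norm_le_of_exists_ne isOpen_ball hU hf hf_le hf_nc z hz)
    (hB.1.norm_lt_one_of_deriv_ne_zero hz hz') hz'
    (eventually_of_mem (isOpen_ball.mem_nhds hz) (hB.2 f hf_diff hf_le hf_nc hcrit)) heq
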